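/- Consider a team of n members with exogenous vector ξ ∈ ℝ^{d_ξ}, information matrices H^i ∈ ℝ^{d_z^i × d_ξ} and D^{ij} ∈ ℝ^{d_z^i × d_u^j} with D^{ij} = 0 whenever j ≥ i, cost matrices N^i ∈ ℝ^{p × d_u^i}, and a linear team strategy given by matrices K^{ij} ∈ ℝ^{d_u^i × d_z^j} for j ≤ i. For each ξ define recursively (in increasing i) Z_K^i(ξ) = H^i ξ + Σ_{j<i} D^{ij} U_K^j(ξ) and U_K^i(ξ) = Σ_{j≤i} K^{ij} Z_K^j(ξ). Fix indices t, s, k with s < t, s ≤ k, and k ≠ t, and suppose there is a matrix Λ ∈ ℝ^{d_u^k × d_u^t} with N^k Λ = N^t and D^{mk} Λ = D^{mt} for every m ∈ {1,…,n}. Define a new linear team strategy K' by K'^{ts} = 0, K'^{ks} = K^{ks} + Λ K^{ts}, and K'^{ij} = K^{ij} for all other blocks. Then Σ_{i=1}^n N^i U_{K'}^i(ξ) = Σ_{i=1}^n N^i U_K^i(ξ) for every ξ ∈ ℝ^{d_ξ}; consequently, for any matrix M, M ξ + Σ_i N^i U_{K'}^i(ξ) = M ξ + Σ_i N^i U_K^i(ξ)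 for every ξ, so the two strategies incur identical cost for every realization of the exogenous vector. -/

import Mathlib

/-!
Let `x = Kᵗˢ Zˢ(ξ)` and let `δ` be the perturbation of the action profile which is `Λ x` at `k`,
`-x` at `t` and `0` elsewhere. Any family of linear maps `A` with `Aᵏ Λ = Aᵗ` satisfies
`Σⱼ Aʲ δʲ = 0` (`sum_map_delta`). Applied to `A = Dⁱ·`, this shows by strong induction on `i` that
the information `Zⁱ` is the same under both strategies: if it agrees up to `j`, the new action of
`j` is `Uʲ + δʲ` (`U_eq_add_delta`), and the perturbation `δ` is invisible to `Zⁱ`. Hence the new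
actions are `U + δ` throughout, and `A = N` gives the invariance of `Σᵢ Nⁱ Uⁱ`.
-/

namespace DynamicTeam5

variable {n dxi : ℕ} {dz du : Fin n → ℕ}
  (H : (i : Fin n) → (Fin dxi → ℝ) →ₗ[ℝ] (Fin (dz i) → ℝ))
  (D : (i j : Fin n) → (Fin (du j) → ℝ) →ₗ[ℝ] (Fin (dz i) → ℝ))
  (K : (i j : Fin n) → (Fin (dz j) → ℝ) →ₗ[ℝ] (Fin (du i) → ℝ))

mutual
/-- Member `i`'s information `Zᵢ(ξ) = Hᵢ ξ + Σ_{j<i} Dᵢⱼ Uⱼ(ξ)` under the linear team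
strategy `K`. -/
noncomputable def Z : (i : Fin n) → (Fin dxi → ℝ) → (Fin (dz i) → ℝ)
  | i => fun ξ => H i ξ + ∑ j : Fin n, if h : j < i then D i j (U j ξ) else 0
  termination_by i => 2 * i.val
  decreasing_by have := h; omega

/-- Member `i`'s action `Uᵢ(ξ) = Σ_{j≤i} Kᵢⱼ Zⱼ(ξ)` under the linear team strategy `K`. -/
noncomputable def U : (i : Fin n) → (Fin dxi → ℝ) → (Fin (du i) → ℝ)
  | i => fun ξ => ∑ j : Fin n, if h : j ≤ i then K i j (Z j ξ) else 0
  termination_by i => 2 * i.val + 1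
  decreasing_by have := h; omega
end

/-- Since `D` is strictly lower triangular, the causality restriction `j < i` in the definition
of `Z` can be dropped. -/
theorem Z_eq_sum (hD : ∀ i j : Fin n, i ≤ j → D i j = 0) (i : Fin n) (ξ : Fin dxi → ℝ) :
    Z H D K i ξ = H i ξ + ∑ j, D i j (U H D K j ξ) := by
  rw [Z]
  refine congrArg (H i ξ + ·) (Finset.sum_congr rfl fun j _ => ?_)
  split_ifs with h
  · rfl
  · simp [hD i j (not_lt.mp h)]

/-- The change in the action profile: `Λ x` is added at member `k` and `x` is removed at
member `t`. -/
noncomputable def delta {n : ℕ} {du : Fin n → ℕ} (t k : Fin n)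
    (Λ : (Fin (du t) → ℝ) →ₗ[ℝ] (Fin (du k) → ℝ)) (x : Fin (du t) → ℝ) :
    (i : Fin n) → (Fin (du i) → ℝ) :=
  Pi.single k (Λ x) - Pi.single t x

theorem sum_map_single {n : ℕ} {du : Fin n → ℕ} {q : ℕ}
    (A : (i : Fin n) → (Fin (du i) → ℝ) →ₗ[ℝ] (Fin q → ℝ)) (k : Fin n) (y : Fin (du k) → ℝ) :
    ∑ i, A i ((Pi.single k y : (i : Fin n) → (Fin (du i) → ℝ)) i) = A k y := by
  rw [Finset.sum_eq_single k]
  · simp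
  · intro j _ hj
    simp [Pi.single_eq_of_ne hj]
  · simp

theorem sum_map_delta {n : ℕ} {du : Fin n → ℕ} {q : ℕ} {t k : Fin n}
    {Λ : (Fin (du t) → ℝ) →ₗ[ℝ] (Fin (du k) → ℝ)}
    (A : (i : Fin n) → (Fin (du i) → ℝ) →ₗ[ℝ] (Fin q → ℝ)) (hA : A k ∘ₗ Λ = A t)
    (x : Fin (du t) → ℝ) : ∑ i, A i (delta t k Λ x i) = 0 := by
  simp only [delta, Pi.sub_apply, map_sub, Finset.sum_sub_distrib, sum_map_single]
  rw [← hA]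
  simp

/-- If the information of members up to `i` is the same under `K` and `K'`, then the action of
member `i` changes exactly by `delta`. -/
theorem U_eq_add_delta
    (K' : (i j : Fin n) → (Fin (dz j) → ℝ) →ₗ[ℝ] (Fin (du i) → ℝ))
    (t s k : Fin n) (hst : s < t) (hsk : s ≤ k) (hkt : k ≠ t)
    (Λ : (Fin (du t) → ℝ) →ₗ[ℝ] (Fin (du k) → ℝ))
    (hK't : K' t s = 0)
    (hK'k : K' k s = K k s + Λ ∘ₗ K t s)
    (hK' : ∀ i j : Fin n, ¬(i = t ∧ j = s) → ¬(i = k ∧ j = s) → K' i j = K i j)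
    (ξ : Fin dxi → ℝ) (i : Fin n) (hZ : ∀ j ≤ i, Z H D K' j ξ = Z H D K j ξ) :
    U H D K' i ξ = U H D K i ξ + delta t k Λ (K t s (Z H D K s ξ)) i := by
  -- Only the block `(i, s)` of the strategy changes, and then only if `i = t` or `i = k`; in both
  -- cases `s ≤ i`, so the changed block does enter the sum defining the action.
  have hterm : ∀ j, (if j ≤ i then K' i j (Z H D K' j ξ) else 0)
      = (if j ≤ i then K i j (Z H D K j ξ) else 0)
        + if j = s then delta t k Λ (K t s (Z H D K s ξ)) i else 0 := by
    intro j
    by_cases hjs : j = s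
    · subst hjs
      by_cases hit : i = t
      · subst hit
        simp [hst.le, hK't, delta, Pi.single_eq_of_ne hkt.symm]
      · by_cases hik : i = k
        · subst hik
          simp [hsk, hK'k, hZ j hsk, delta, Pi.single_eq_of_ne hkt]
        · rw [hK' i j (by tauto) (by tauto)]
          have hd : delta t k Λ (K t j (Z H D K j ξ)) i = 0 := by
            simp [delta, Pi.single_eq_of_ne hit, Pi.single_eq_of_ne hik]
          rw [hd]
          by_cases h : j ≤ i
          · simp [hZ j h]
          · simp [h]
    · rw [hK' i j (by tauto) (by tauto)]
      by_cases h : j ≤ i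
      · simp [hjs, hZ j h]
      · simp [hjs, h]
  rw [U, U]
  simp only [dite_eq_ite]
  rw [Finset.sum_congr rfl fun j _ => hterm j, Finset.sum_add_distrib]
  simp

end DynamicTeam5

open DynamicTeam5 in
/-- Claim 1 of the paper: the strategy transformation of Procedure 1 (removing `Kᵗˢ Zˢ`
from member `t`'s linear strategy and adding the compensating term `Λ Kᵗˢ Zˢ` to member
`k`'s strategy, where `Nᵏ Λ = Nᵗ` and `Dᵐᵏ Λ = Dᵐᵗ` for all `m`) leaves the combined cost
term `N U = Σᵢ Nᵢ Uᵢ` unchanged; consequently `M ξ + Σᵢ Nᵢ Uᵢ` is unchanged for every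
realization `ξ` of the exogenous vector, so the two strategies incur identical cost. -/
theorem procedure1_preserves_cost
    (n dxi p : ℕ) (dz du : Fin n → ℕ)
    (H : (i : Fin n) → (Fin dxi → ℝ) →ₗ[ℝ] (Fin (dz i) → ℝ))
    (D : (i j : Fin n) → (Fin (du j) → ℝ) →ₗ[ℝ] (Fin (dz i) → ℝ))
    (hD : ∀ i j : Fin n, i ≤ j → D i j = 0)
    (N : (i : Fin n) → (Fin (du i) → ℝ) →ₗ[ℝ] (Fin p → ℝ))
    (K K' : (i j : Fin n) → (Fin (dz j) → ℝ) →ₗ[ℝ] (Fin (du i) → ℝ))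
    (t s k : Fin n) (hst : s < t) (hsk : s ≤ k) (hkt : k ≠ t)
    (Λ : (Fin (du t) → ℝ) →ₗ[ℝ] (Fin (du k) → ℝ))
    (hΛN : N k ∘ₗ Λ = N t)
    (hΛD : ∀ m : Fin n, D m k ∘ₗ Λ = D m t)
    (hK't : K' t s = 0)
    (hK'k : K' k s = K k s + Λ ∘ₗ K t s)
    (hK' : ∀ i j : Fin n, ¬(i = t ∧ j = s) → ¬(i = k ∧ j = s) → K' i j = K i j) :
    (∀ ξ : Fin dxi → ℝ, ∑ i : Fin n, N i (U H D K' i ξ) = ∑ i : Fin n, N i (U H D K i ξ))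
    ∧ ∀ (M : (Fin dxi → ℝ) →ₗ[ℝ] (Fin p → ℝ)) (ξ : Fin dxi → ℝ),
        M ξ + ∑ i : Fin n, N i (U H D K' i ξ) = M ξ + ∑ i : Fin n, N i (U H D K i ξ) := by
  have hU := U_eq_add_delta H D K K' t s k hst hsk hkt Λ hK't hK'k hK'
  have hZ : ∀ (ξ : Fin dxi → ℝ) (i : Fin n), Z H D K' i ξ = Z H D K i ξ := by
    intro ξ i
    induction i using WellFoundedLT.induction with
    | ind i ih =>
      have hDU : ∀ j, D i j (U H D K' j ξ)
          = D i j (U H D K j ξ) + D i j (delta t k Λ (K t s (Z H D K s ξ)) j) := by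
        intro j
        rcases lt_or_ge j i with hj | hj
        · rw [hU ξ j fun l hl => ih l (hl.trans_lt hj), map_add]
        · simp [hD i j hj]
      rw [Z_eq_sum H D K' hD, Z_eq_sum H D K hD, Finset.sum_congr rfl fun j _ => hDU j,
        Finset.sum_add_distrib, sum_map_delta (D i) (hΛD i), add_zero]
  have hN : ∀ ξ : Fin dxi → ℝ,
      ∑ i : Fin n, N i (U H D K' i ξ) = ∑ i : Fin n, N i (U H D K i ξ) := by
    intro ξ
    simp only [fun i => hU ξ i fun j _ => hZ ξ j, map_add, Finset.sum_add_distrib,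
      sum_map_delta N hΛN, add_zero]
  exact ⟨hN, fun M ξ => by rw [hN ξ]⟩
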